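/- Let {A',A''} be a nontrivial partition of A and let Γ ⊆ S satisfy A' ⊆ int Γ, A'' ⊆ int(S∖Γ), and Π(a, int Γ) = Π(a, cl Γ) for every a ∈ A'' with ρ(a) ≥ Φ_ρ(A'', int Γ). If Φ_ρ(A'', int Γ) > Φ_ρ(A', cl(S∖Γ)), then there exist x̂ ∈ ∂Γ and ã, â ∈ A'' such that Π(x̂,ã) = 1, Π(â,x̂) = Π(â, cl Γ), ρ(x̂) = ρ(â)·Π(â,x̂) = Φ_ρ(A'', int Γ) = Φ_ρ(int(S∖Γ), int Γ) = Φ_ρ(cl Γ, cl(S∖Γ)), and ρ(x̂) = sup_{x∈∂Γ} ρ(x). -/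

import Mathlib

open Filter Topology Metric Set MeasureTheory
open scoped NNReal

noncomputable section

/-- A deviability density on a topological space `E`. -/
def IsDeviabilityDensity {E : Type*} [TopologicalSpace E] (p : E → ℝ) : Prop :=
  (∀ x, p x ∈ Set.Icc (0:ℝ) 1) ∧ (⨆ x, p x) = 1 ∧
    ∀ γ ∈ Set.Ioc (0:ℝ) 1, IsCompact {x | γ ≤ p x}

variable {S : Type*} [MetricSpace S]

/-- Time shift `θ_s` on continuous paths. -/
def pshift (s : ℝ≥0) (X : C(ℝ≥0, S)) : C(ℝ≥0, S) :=
  ⟨fun t => X (s + t), X.continuous.comp (continuous_const.add continuous_id)⟩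

/-- `Π_{x,t}(y)`. -/
def transDen (Px : S → C(ℝ≥0, S) → ℝ) (x : S) (t : ℝ≥0) (y : S) : ℝ :=
  ⨆ X ∈ {X : C(ℝ≥0, S) | X t = y}, Px x X

/-- The standing assumptions (2.2)--(2.5) of the paper, together with the basic
assumptions on the family of path deviability densities `Px` and the set `A`. -/
structure DevSetup (S : Type*) [MetricSpace S] (Px : S → C(ℝ≥0, S) → ℝ) (A : Set S) :
    Prop where
  dev : ∀ x, IsDeviabilityDensity (Px x)
  start : ∀ x (X : C(ℝ≥0, S)), X 0 ≠ x → Px x X = 0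
  /-- (2.2) upper semicontinuity -/
  usc : UpperSemicontinuous (fun q : S × C(ℝ≥0, S) => Px q.1 q.2)
  /-- (2.2) uniform upper compactness -/
  cpt : ∀ K : Set S, IsCompact K → ∀ γ ∈ Set.Ioc (0:ℝ) 1,
    IsCompact (⋃ x ∈ K, {X : C(ℝ≥0, S) | γ ≤ Px x X})
  /-- (2.3) the maxitive Markov property -/
  markov : ∀ x (X : C(ℝ≥0, S)) (s : ℝ≥0),
    Px x X = (⨆ X' ∈ {X' : C(ℝ≥0, S) | ∀ u ≤ s, X' u = X u}, Px x X') *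
      Px (X s) (pshift s X)
  /-- (2.4) `A` is locally finite -/
  locFin : ∀ K : Set S, IsCompact K → (K ∩ A).Finite
  /-- (2.4)(i) -/
  attract : ∀ x (X : C(ℝ≥0, S)), Px x X = 1 → (⨅ t : ℝ≥0, infDist (X t) A) = 0
  /-- (2.4)(ii) -/
  equil : ∀ a ∈ A, Px a (ContinuousMap.const ℝ≥0 a) = 1
  /-- (2.4)(iii) -/
  connect : ∀ a ∈ A, ∀ a' ∈ A, ∃ t : ℝ≥0, 0 < t ∧ 0 < transDen Px a t a'
  /-- (2.4)(iv) -/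
  nearA : ∀ ε : ℝ, 0 < ε → ∃ δ : ℝ, 0 < δ ∧ ∀ x : S, infDist x A < δ →
    ∃ s₀ s₁ : ℝ≥0, 0 < s₀ ∧ 0 < s₁ ∧ ∃ a ∈ A,
      1 - ε < transDen Px x s₀ a ∧ 1 - ε < transDen Px a s₁ x
  /-- (2.4)(v) -/
  localMove : ∀ x : S, ∀ ε : ℝ, 0 < ε → ∃ δ : ℝ, 0 < δ ∧ ∃ t₀ t₁ : ℝ≥0,
    ∀ x' : S, dist x x' < δ →
      1 - ε < transDen Px x t₀ x' ∧ 1 - ε < transDen Px x' t₁ x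
  /-- (2.5) uniform tightness -/
  tight : ∀ K₁ : Set S, IsCompact K₁ → ∀ ε : ℝ, 0 < ε → ∃ K₂ : Set S, IsCompact K₂ ∧
    Filter.limsup (fun t : ℝ≥0 => ⨆ x ∈ K₁, ⨆ y ∈ K₂ᶜ, transDen Px x t y) atTop < ε

/-- LD convergence at the given rate of a sequence of Borel probability measures to a
deviability density. -/
def LDConv {E : Type*} [TopologicalSpace E] [MeasurableSpace E]
    (Q : ℕ → Measure E) (rate : ℕ → ℕ) (p : E → ℝ) : Prop :=
  ∀ f : E → ℝ, Continuous f → (∀ x, 0 ≤ f x) → BddAbove (Set.range f) →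
    Tendsto (fun n => (∫ x, (f x) ^ (rate n) ∂(Q n)) ^ ((rate n : ℝ)⁻¹)) atTop
      (𝓝 (⨆ x, f x * p x))

variable [MeasurableSpace S] [BorelSpace S]

/-- The max flux `Φ_ρ(Γ,Γ')` relative to the limiting transition density `PL`. -/
def maxFlux (PL : S → S → ℝ) (ρ : S → ℝ) (Γ Γ' : Set S) : ℝ :=
  ⨆ x ∈ Γ, ρ x * ⨆ y ∈ Γ', PL x y

/-- `Φ_ρ(Γ, x)`, the max flux into a point. -/
def maxFluxPt (PL : S → S → ℝ) (ρ : S → ℝ) (Γ : Set S) (x : S) : ℝ :=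
  ⨆ a ∈ Γ, ρ a * PL a x

set_option linter.unusedSectionVars false

/-! ### Real suprema -/

theorem le_bsup' {α : Type*} {s : Set α} {f : α → ℝ} (_h0 : ∀ x, 0 ≤ f x) (h1 : ∀ x, f x ≤ 1)
    {x : α} (hx : x ∈ s) : f x ≤ ⨆ y ∈ s, f y := by
  have hb : BddAbove (Set.range fun y => ⨆ (_ : y ∈ s), f y) := by
    refine ⟨1, ?_⟩
    rintro _ ⟨y, rfl⟩
    exact Real.iSup_le (fun _ => h1 y) zero_le_one
  have := le_ciSup hb x
  simpa [hx] using this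

theorem bsup_le' {α : Type*} {s : Set α} {f : α → ℝ} {c : ℝ} (hc : 0 ≤ c)
    (h : ∀ x ∈ s, f x ≤ c) : (⨆ y ∈ s, f y) ≤ c :=
  Real.iSup_le (fun y => Real.iSup_le (fun hy => h y hy) hc) hc

theorem exists_of_lt_bsup' {α : Type*} {s : Set α} {f : α → ℝ} {c : ℝ} (hc : 0 ≤ c)
    (h : c < ⨆ y ∈ s, f y) : ∃ x ∈ s, c < f x := by
  by_contra hcon
  push Not at hcon
  exact absurd (bsup_le' hc hcon) (not_le.2 h)

theorem bsup_nonneg' {α : Type*} {s : Set α} {f : α → ℝ} (h0 : ∀ x, 0 ≤ f x) :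
    0 ≤ ⨆ y ∈ s, f y :=
  Real.iSup_nonneg (fun y => Real.iSup_nonneg (fun _ => h0 y))

/-! ### Transition densities -/

section Trans

variable {Px : S → C(ℝ≥0, S) → ℝ} {A : Set S}

theorem px_nonneg (hyp : DevSetup S Px A) (x : S) (X : C(ℝ≥0, S)) : 0 ≤ Px x X :=
  ((hyp.dev x).1 X).1

theorem px_le_one (hyp : DevSetup S Px A) (x : S) (X : C(ℝ≥0, S)) : Px x X ≤ 1 :=
  ((hyp.dev x).1 X).2

theorem td_nonneg (hyp : DevSetup S Px A) (x : S) (t : ℝ≥0) (y : S) : 0 ≤ transDen Px x t y :=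
  bsup_nonneg' (px_nonneg hyp x)

theorem td_le_one (hyp : DevSetup S Px A) (x : S) (t : ℝ≥0) (y : S) : transDen Px x t y ≤ 1 :=
  bsup_le' zero_le_one (fun X _ => px_le_one hyp x X)

theorem px_le_td (hyp : DevSetup S Px A) (x : S) (t : ℝ≥0) (X : C(ℝ≥0, S)) :
    Px x X ≤ transDen Px x t (X t) :=
  le_bsup' (px_nonneg hyp x) (px_le_one hyp x) (by simp)

theorem exists_path (hyp : DevSetup S Px A) {x : S} {t : ℝ≥0} {y : S} {c : ℝ} (hc : 0 ≤ c)
    (h : c < transDen Px x t y) : ∃ X : C(ℝ≥0, S), X 0 = x ∧ X t = y ∧ c < Px x X := by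
  obtain ⟨X, hX, hc'⟩ := exists_of_lt_bsup' hc h
  refine ⟨X, ?_, hX, hc'⟩
  by_contra hne
  rw [hyp.start x X hne] at hc'
  linarith

/-- Splitting a path at a time. -/
theorem px_le_mul (hyp : DevSetup S Px A) (x : S) (X : C(ℝ≥0, S)) (s u : ℝ≥0) :
    Px x X ≤ transDen Px x s (X s) * transDen Px (X s) u (X (s + u)) := by
  rw [hyp.markov x X s]
  have h2 := px_le_td hyp (X s) u (pshift s X)
  refine mul_le_mul ?_ h2 (px_nonneg hyp _ _) (td_nonneg hyp _ _ _)
  refine bsup_le' (td_nonneg hyp _ _ _) (fun X' hX' => ?_)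
  have := px_le_td hyp x s X'
  rwa [show X' s = X s from hX' s le_rfl] at this

/-- Concatenation of paths. -/
def concat (s : ℝ≥0) (X Y : C(ℝ≥0, S)) (h : X s = Y 0) : C(ℝ≥0, S) :=
  ⟨fun t => if t ≤ s then X t else Y (t - s), by
    refine Continuous.if_le X.continuous (Y.continuous.comp (by fun_prop)) continuous_id
      continuous_const ?_
    intro t ht
    change t = s at ht
    subst ht
    simpa using h⟩

/-- Chapman--Kolmogorov inequality. -/
theorem td_mul_le (hyp : DevSetup S Px A) (x y z : S) (s t : ℝ≥0) :
    transDen Px x s y * transDen Px y t z ≤ transDen Px x (s + t) z := by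
  by_contra hcon
  push Not at hcon
  have h0 := td_nonneg hyp x (s + t) z
  set a := transDen Px x s y
  set b := transDen Px y t z
  set c := transDen Px x (s + t) z
  have ha0 : 0 ≤ a := td_nonneg hyp _ _ _
  have hb0 : 0 ≤ b := td_nonneg hyp _ _ _
  have hbpos : 0 < b := by
    rcases hb0.eq_or_lt with h | h
    · rw [← h] at hcon; simp at hcon; linarith
    · exact h
  have h1 : c / b < a := by rwa [div_lt_iff₀ hbpos]
  obtain ⟨X, hX0, hXs, hX⟩ := exists_path hyp (div_nonneg h0 hb0) h1
  have hXpos : 0 < Px x X := lt_of_le_of_lt (div_nonneg h0 hb0) hX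
  have h2 : c / Px x X < b := by
    rw [div_lt_iff₀ hbpos] at hX
    rw [div_lt_iff₀ hXpos]; linarith
  obtain ⟨Y, hY0, hYt, hY⟩ := exists_path hyp (div_nonneg h0 hXpos.le) h2
  rw [div_lt_iff₀ hXpos] at hY
  let Z := concat s X Y (by rw [hXs, hY0])
  have hZs : Z s = y := by
    change (if s ≤ s then X s else Y (s - s)) = y
    simp [hXs]
  have hZ : pshift s Z = Y := by
    ext u
    change (if s + u ≤ s then X (s + u) else Y (s + u - s)) = Y u
    split_ifs with h
    · have : u = 0 := by simpa using h
      subst this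
      simp [hXs, hY0]
    · simp
  have h3 := px_le_td hyp x (s + t) Z
  have h4 : Z (s + t) = z := by
    have : pshift s Z t = Y t := by rw [hZ]
    exact this.trans hYt
  rw [h4, hyp.markov x Z s, hZs, hZ] at h3
  have h5 : Px x X ≤ ⨆ X' ∈ {X' : C(ℝ≥0, S) | ∀ u ≤ s, X' u = Z u}, Px x X' := by
    refine le_bsup' (px_nonneg hyp x) (px_le_one hyp x) ?_
    intro u hu
    change X u = (if u ≤ s then X u else Y (u - s))
    simp [hu]
  have h6 := mul_le_mul_of_nonneg_right h5 (px_nonneg hyp y Y)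
  change _ ≤ c at h3
  nlinarith

theorem td_self (hyp : DevSetup S Px A) {a : S} (ha : a ∈ A) (t : ℝ≥0) :
    transDen Px a t a = 1 := by
  refine le_antisymm (td_le_one hyp _ _ _) ?_
  have := px_le_td hyp a t (ContinuousMap.const ℝ≥0 a)
  rw [hyp.equil a ha] at this
  simpa using this

theorem path_cross (X : C(ℝ≥0, S)) (t : ℝ≥0) (Γ : Set S) (h0 : X 0 ∈ closure Γ)
    (h1 : X t ∈ closure Γᶜ) : ∃ s ≤ t, X s ∈ frontier Γ := by
  have hpre : IsPreconnected (Set.Icc 0 t) := isPreconnected_Icc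
  rw [isPreconnected_closed_iff] at hpre
  obtain ⟨s, hs, hs1, hs2⟩ := hpre (X ⁻¹' closure Γ) (X ⁻¹' closure Γᶜ)
    (isClosed_closure.preimage X.continuous) (isClosed_closure.preimage X.continuous)
    (by
      intro s _
      by_cases h : X s ∈ Γ
      · exact Or.inl (subset_closure h)
      · exact Or.inr (subset_closure h))
    ⟨0, by simp, h0⟩ ⟨t, by simp, h1⟩
  exact ⟨s, hs.2, by rw [frontier_eq_closure_inter_closure]; exact ⟨hs1, hs2⟩⟩

theorem td_cross (hyp : DevSetup S Px A) {x y : S} {t : ℝ≥0} {c : ℝ} (hc : 0 ≤ c) {Γ : Set S}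
    (h : c < transDen Px x t y) (hx : x ∈ closure Γ) (hy : y ∈ closure Γᶜ) :
    ∃ z ∈ frontier Γ, ∃ s u : ℝ≥0, c < transDen Px x s z * transDen Px z u y := by
  obtain ⟨X, hX0, hXt, hX⟩ := exists_path hyp hc h
  obtain ⟨s, hs, hsΓ⟩ := path_cross X t Γ (hX0 ▸ hx) (hXt ▸ hy)
  refine ⟨X s, hsΓ, s, t - s, ?_⟩
  have := px_le_mul hyp x X s (t - s)
  rw [add_tsub_cancel_of_le hs, hXt] at this
  linarith

/-- Staying away from `A` costs. -/
theorem away_one (hyp : DevSetup S Px A) {K : Set S} (hK : IsCompact K) {δ : ℝ} (hδ : 0 < δ) :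
    ∃ T : ℝ≥0, ∃ η : ℝ, 0 ≤ η ∧ η < 1 ∧ ∀ X : C(ℝ≥0, S), X 0 ∈ K →
      (∀ s ≤ T, δ ≤ infDist (X s) A) → Px (X 0) X ≤ η := by
  by_contra hcon
  push Not at hcon
  have hη : ∀ k : ℕ, (0:ℝ) ≤ 1 - 1 / ((k:ℝ) + 2) := by
    intro k
    have : 1 / ((k:ℝ) + 2) ≤ 1 := by
      rw [div_le_one (by positivity)]; linarith [Nat.cast_nonneg (α := ℝ) k]
    linarith
  choose X hXK hXaway hX using fun k : ℕ => hcon (k : ℝ≥0) (1 - 1 / ((k:ℝ) + 2)) (hη k)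
    (by have : 0 < 1 / ((k:ℝ) + 2) := by positivity
        linarith)
  have hC := hyp.cpt K hK (1/2) ⟨by norm_num, by norm_num⟩
  have hmem : ∀ k, X k ∈ ⋃ x ∈ K, {Z : C(ℝ≥0, S) | 1/2 ≤ Px x Z} := by
    intro k
    simp only [Set.mem_iUnion]
    refine ⟨X k 0, hXK k, ?_⟩
    have : 1 / ((k:ℝ) + 2) ≤ 1 / 2 := by
      apply one_div_le_one_div_of_le <;> linarith [Nat.cast_nonneg (α := ℝ) k]
    have := hX k
    simp only [Set.mem_ofPred_eq]
    linarith
  obtain ⟨Y, -, hY⟩ := hC (f := map X atTop) (by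
    rw [le_principal_iff]
    exact mem_map.2 (Filter.univ_mem' hmem))
  have hfreq : ∀ U ∈ 𝓝 Y, ∃ᶠ k in atTop, X k ∈ U := by
    intro U hU
    exact (hY.frequently hU : ∃ᶠ Z in map X atTop, Z ∈ U)
  have hYaway : ∀ s, δ ≤ infDist (Y s) A := by
    intro s
    by_contra hlt
    push Not at hlt
    have hU : {Z : C(ℝ≥0, S) | infDist (Z s) A < δ} ∈ 𝓝 Y := by
      have hcont : Continuous (fun Z : C(ℝ≥0, S) => infDist (Z s) A) :=
        (continuous_infDist_pt A).comp (continuous_eval_const s)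
      exact hcont.continuousAt.eventually (gt_mem_nhds hlt)
    obtain ⟨k, hk1, hk2⟩ := ((hfreq _ hU).and_eventually
      (eventually_ge_atTop ⌈s⌉₊)).exists
    have := hXaway k s ((Nat.le_ceil s).trans (by exact_mod_cast hk2))
    simp only [Set.mem_ofPred_eq] at hk1
    linarith
  have hYone : Px (Y 0) Y = 1 := by
    refine le_antisymm (px_le_one hyp _ _) ?_
    by_contra hlt
    push Not at hlt
    obtain ⟨q, hq1, hq2⟩ := exists_between hlt
    have hcont : Continuous (fun Z : C(ℝ≥0, S) => (Z 0, Z)) :=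
      (continuous_eval_const 0).prodMk continuous_id
    have hU : {Z : C(ℝ≥0, S) | Px (Z 0) Z < q} ∈ 𝓝 Y :=
      (hcont.tendsto Y).eventually (hyp.usc (Y 0, Y) q hq1)
    have hlim : Tendsto (fun k : ℕ => 1 - 1 / ((k:ℝ) + 2)) atTop (𝓝 (1 - 0)) := by
      refine tendsto_const_nhds.sub ?_
      refine tendsto_const_nhds.div_atTop ?_
      exact tendsto_atTop_add_const_right _ _ tendsto_natCast_atTop_atTop
    obtain ⟨k, hk1, hk2⟩ := ((hfreq _ hU).and_eventually
      (hlim.eventually (lt_mem_nhds (by linarith : q < 1 - 0)))).exists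
    have := hX k
    simp only [Set.mem_ofPred_eq] at hk1
    linarith
  have h1 := hyp.attract _ Y hYone
  have h2 : δ ≤ ⨅ t : ℝ≥0, infDist (Y t) A := le_ciInf hYaway
  linarith

theorem away_pow (hyp : DevSetup S Px A) {K : Set S} {δ : ℝ} {T : ℝ≥0} {η : ℝ} (hη : 0 ≤ η)
    (h : ∀ X : C(ℝ≥0, S), X 0 ∈ K →
      (∀ s ≤ T, δ ≤ infDist (X s) A) → Px (X 0) X ≤ η) (k : ℕ) :
    ∀ X : C(ℝ≥0, S), (∀ s, X s ∈ K) → (∀ s ≤ k * T, δ ≤ infDist (X s) A) →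
      Px (X 0) X ≤ η ^ k := by
  induction k with
  | zero => intro X _ _; simpa using px_le_one hyp _ _
  | succ k ih =>
    intro X hXK hX
    rw [hyp.markov (X 0) X T, pow_succ, mul_comm (η ^ k)]
    have hle : T ≤ ((k + 1 : ℕ) : ℝ≥0) * T := by
      push_cast
      rw [add_mul, one_mul]
      exact le_add_self
    refine mul_le_mul ?_ ?_ (px_nonneg hyp _ _) hη
    · refine bsup_le' hη (fun X' hX' => ?_)
      have h0 : X' 0 = X 0 := hX' 0 (zero_le)
      rw [← h0]
      refine h X' (h0 ▸ hXK 0) (fun s hs => ?_)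
      rw [hX' s hs]
      exact hX s (hs.trans hle)
    · have := ih (pshift T X) (fun s => hXK (T + s)) (fun s hs => hX (T + s) (by
        push_cast
        rw [add_mul, one_mul, add_comm]
        exact add_le_add_left hs T))
      have h0 : pshift T X 0 = X T := by simp [pshift]
      rwa [h0] at this

/-- Long paths visit `A`. -/
theorem visitA (hyp : DevSetup S Px A) {ρ : S → ℝ} (hρdev : IsDeviabilityDensity ρ)
    (hρinv : ∀ x t y, ρ x * transDen Px x t y ≤ ρ y) {c c' : ℝ} (hc' : 0 < c') (hcc : c' < c)
    (hc1 : c ≤ 1) :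
    ∃ T : ℝ≥0, ∀ t ≥ T, ∀ x y, c < ρ x * transDen Px x t y →
      ∃ a ∈ A, ∃ s u : ℝ≥0, c' < ρ x * (transDen Px x s a * transDen Px a u y) := by
  have hc : 0 < c := hc'.trans hcc
  obtain ⟨ε, hε0, hε1, hε⟩ : ∃ ε : ℝ, 0 < ε ∧ ε < 1 ∧ c' < c * ((1 - ε) * (1 - ε)) := by
    refine ⟨(c - c') / (2 * c), by apply div_pos <;> linarith, ?_, ?_⟩
    · rw [div_lt_one (by linarith)]; linarith
    · have : c * ((c - c') / (2 * c)) = (c - c') / 2 := by field_simp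
      have h2 : 0 < (c - c') / (2 * c) := by apply div_pos <;> linarith
      nlinarith [mul_pos hc (mul_pos h2 h2)]
  obtain ⟨δ, hδ, hnear⟩ := hyp.nearA ε hε0
  have hK := hρdev.2.2 c ⟨hc, hc1⟩
  obtain ⟨T0, η, hη0, hη1, haw⟩ := away_one hyp hK hδ
  obtain ⟨k, hk⟩ := exists_pow_lt_of_lt_one hc hη1
  refine ⟨k * T0, fun t ht x y hxy => ?_⟩
  have hρ0 : 0 ≤ ρ x := (hρdev.1 x).1
  have hρ1 : ρ x ≤ 1 := (hρdev.1 x).2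
  have hρpos : 0 < ρ x := by
    rcases hρ0.eq_or_lt with h | h
    · rw [← h] at hxy; simp at hxy; linarith
    · exact h
  obtain ⟨X, hX0, hXt, hX⟩ := exists_path hyp (c := c / ρ x) (by positivity)
    (x := x) (t := t) (y := y) (by rw [div_lt_iff₀ hρpos]; linarith)
  rw [div_lt_iff₀ hρpos] at hX
  have hXK : ∀ s, X s ∈ {x | c ≤ ρ x} := by
    intro s
    have h1 := hρinv x s (X s)
    have h2 := px_le_td hyp x s X
    simp only [Set.mem_ofPred_eq]
    nlinarith
  have hnot : ∃ s ≤ k * T0, infDist (X s) A < δ := by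
    by_contra hcon
    push Not at hcon
    have := away_pow hyp hη0 haw k X hXK hcon
    rw [hX0] at this
    nlinarith [px_nonneg hyp x X]
  obtain ⟨s, hs, hsA⟩ := hnot
  obtain ⟨s₀, s₁, -, -, a, haA, ha0, ha1⟩ := hnear (X s) hsA
  refine ⟨a, haA, s + s₀, s₁ + (t - s), ?_⟩
  have h1 := td_mul_le hyp x (X s) a s s₀
  have h2 := td_mul_le hyp a (X s) y s₁ (t - s)
  have h3 := px_le_mul hyp x X s (t - s)
  rw [add_tsub_cancel_of_le (hs.trans ht), hXt] at h3
  have e1 := td_nonneg hyp x s (X s)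
  have e2 := td_nonneg hyp (X s) (t - s) y
  set p := transDen Px x s (X s)
  set q := transDen Px (X s) (t - s) y
  set p' := transDen Px (X s) s₀ a
  set q' := transDen Px a s₁ (X s)
  have h4 : (p * p') * (q' * q) ≤
      transDen Px x (s + s₀) a * transDen Px a (s₁ + (t - s)) y :=
    mul_le_mul h1 h2 (mul_nonneg (by linarith) e2) (td_nonneg hyp _ _ _)
  have h5 : (1 - ε) * (1 - ε) ≤ p' * q' :=
    mul_le_mul ha0.le ha1.le (by linarith) (by linarith)
  calc c' < c * ((1 - ε) * (1 - ε)) := hε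
    _ ≤ (ρ x * (p * q)) * ((1 - ε) * (1 - ε)) := by
        apply mul_le_mul_of_nonneg_right _ (mul_nonneg (by linarith) (by linarith))
        nlinarith
    _ ≤ (ρ x * (p * q)) * (p' * q') := mul_le_mul_of_nonneg_left h5 (by positivity)
    _ = ρ x * ((p * p') * (q' * q)) := by ring
    _ ≤ _ := mul_le_mul_of_nonneg_left h4 hρ0

end Trans

/-! ### Large deviation estimates -/

/-- Technical form of a deviability density. -/
def GoodDen (p : S → ℝ) : Prop :=
  (∀ y, 0 ≤ p y) ∧ (∀ y, p y ≤ 1) ∧ ∀ γ : ℝ, 0 < γ → γ ≤ 1 →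
    ∃ C : Set S, IsCompact C ∧ (∀ y ∈ C, γ ≤ p y) ∧ ∀ y, y ∉ C → p y ≤ γ

theorem goodDen_of_dev {p : S → ℝ} (h : IsDeviabilityDensity p) : GoodDen p := by
  refine ⟨fun y => (h.1 y).1, fun y => (h.1 y).2, fun γ h0 h1 =>
    ⟨{x | γ ≤ p x}, h.2.2 γ ⟨h0, h1⟩, fun y hy => hy, fun y hy => ?_⟩⟩
  simp only [Set.mem_ofPred_eq, not_le] at hy
  exact hy.le

theorem goodDen_td {Px : S → C(ℝ≥0, S) → ℝ} {A : Set S} (hyp : DevSetup S Px A) (x : S)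
    (t : ℝ≥0) : GoodDen (fun y => transDen Px x t y) := by
  refine ⟨fun y => td_nonneg hyp _ _ _, fun y => td_le_one hyp _ _ _, fun γ h0 h1 =>
    ⟨(fun X : C(ℝ≥0, S) => X t) '' {X | γ ≤ Px x X},
      ((hyp.dev x).2.2 γ ⟨h0, h1⟩).image (continuous_eval_const t), ?_, ?_⟩⟩
  · rintro _ ⟨X, hX, rfl⟩
    exact le_trans hX (px_le_td hyp x t X)
  · intro y hy
    refine bsup_le' h0.le (fun X hX => ?_)
    by_contra hlt
    push Not at hlt
    exact hy ⟨X, hlt.le, hX⟩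

theorem dev_usc {p : S → ℝ} (h : IsDeviabilityDensity p) {x : S} {e : ℝ} (hx : p x < e) :
    ∀ᶠ x' in 𝓝 x, p x' < e := by
  by_cases he : e ≤ 1
  · have he0 : 0 < e := lt_of_le_of_lt (h.1 x).1 hx
    have hcl : IsOpen {x | e ≤ p x}ᶜ := (h.2.2 e ⟨he0, he⟩).isClosed.isOpen_compl
    have := hcl.mem_nhds (x := x) (by simpa using hx)
    filter_upwards [this] with x' hx'
    simpa using hx'
  · exact Filter.Eventually.of_forall (fun x' => lt_of_le_of_lt (h.1 x').2 (not_le.1 he))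

theorem integrable_pow_of {μ : Measure S} [IsProbabilityMeasure μ] {f : S → ℝ} (hf : Continuous f)
    (h01 : ∀ x, f x ∈ Set.Icc (0:ℝ) 1) (n : ℕ) : Integrable (fun x => f x ^ n) μ := by
  refine Integrable.mono' (integrable_const (1:ℝ)) (hf.pow n).aestronglyMeasurable ?_
  refine Filter.Eventually.of_forall (fun x => ?_)
  rw [Real.norm_of_nonneg (pow_nonneg (h01 x).1 n)]
  exact pow_le_one₀ (h01 x).1 (h01 x).2

theorem ld_upper {Q : ℕ → Measure S} (hQ : ∀ n, IsProbabilityMeasure (Q n)) {rate : ℕ → ℕ}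
    (hr : Tendsto rate atTop atTop) {p : S → ℝ} (hp : GoodDen p) (h : LDConv Q rate p)
    {F : Set S} (hF : IsClosed F) {c d : ℝ} (hc : 0 ≤ c) (hcd : c < d)
    (hle : ∀ y ∈ F, p y ≤ c) : ∀ᶠ n in atTop, Q n F ≤ ENNReal.ofReal (d ^ rate n) := by
  by_cases hd : d ≤ 1
  swap
  · refine Filter.Eventually.of_forall (fun n => ?_)
    have := hQ n
    refine prob_le_one.trans ?_
    rw [ENNReal.one_le_ofReal]
    exact one_le_pow₀ (not_le.1 hd).le
  obtain ⟨γ, hγ1, hγ2⟩ := exists_between hcd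
  obtain ⟨C, hC, hC1, hC2⟩ := hp.2.2 γ (by linarith) (by linarith)
  have hdis : Disjoint C F := by
    rw [Set.disjoint_left]
    intro y hyC hyF
    linarith [hC1 y hyC, hle y hyF]
  obtain ⟨f, hf0, hf1, hf⟩ := exists_continuous_zero_one_of_isClosed hC.isClosed hF hdis
  have hlim := h f f.continuous (fun x => (hf x).1) ⟨1, by rintro _ ⟨x, rfl⟩; exact (hf x).2⟩
  have hsup : (⨆ x, f x * p x) ≤ γ := by
    refine Real.iSup_le (fun x => ?_) (by linarith)
    by_cases hx : x ∈ C
    · rw [hf0 hx]; simp; linarith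
    · have h1 := hC2 x hx
      have h2 := hp.1 x
      nlinarith [(hf x).1, (hf x).2]
  filter_upwards [hlim.eventually (gt_mem_nhds (lt_of_le_of_lt hsup hγ2)),
    hr.eventually_ge_atTop 1] with n hn hn1
  have := hQ n
  have hI : 0 ≤ ∫ x, f x ^ rate n ∂(Q n) :=
    integral_nonneg (fun x => pow_nonneg (hf x).1 _)
  have hle2 : ∫ x, f x ^ rate n ∂(Q n) ≤ d ^ rate n := by
    rw [← Real.rpow_inv_natCast_pow hI (by omega : rate n ≠ 0)]
    exact pow_le_pow_left₀ (Real.rpow_nonneg hI _) hn.le _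
  refine le_trans ?_ (ENNReal.ofReal_le_ofReal hle2)
  rw [ofReal_integral_eq_lintegral_ofReal (integrable_pow_of f.continuous hf _)
    (Filter.Eventually.of_forall (fun x => pow_nonneg (hf x).1 _))]
  calc Q n F = ∫⁻ x in F, 1 ∂(Q n) := by simp
    _ ≤ ∫⁻ x in F, ENNReal.ofReal (f x ^ rate n) ∂(Q n) := by
        refine setLIntegral_mono' hF.measurableSet (fun x hx => ?_)
        rw [hf1 hx]; simp
    _ ≤ _ := setLIntegral_le_lintegral _ _

theorem ld_lower {Q : ℕ → Measure S} (hQ : ∀ n, IsProbabilityMeasure (Q n)) {rate : ℕ → ℕ}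
    (hr : Tendsto rate atTop atTop) {p : S → ℝ} (hp : GoodDen p) (h : LDConv Q rate p)
    {O : Set S} (hO : IsOpen O) {c : ℝ} (hc : 0 ≤ c) {y : S} (hy : y ∈ O) (hcy : c < p y) :
    ∀ᶠ n in atTop, ENNReal.ofReal (c ^ rate n) ≤ Q n O := by
  have hdis : Disjoint Oᶜ {y} := by
    rw [Set.disjoint_singleton_right]
    simpa using hy
  obtain ⟨f, hf0, hf1, hf⟩ := exists_continuous_zero_one_of_isClosed hO.isClosed_compl
    isClosed_singleton hdis
  have hlim := h f f.continuous (fun x => (hf x).1) ⟨1, by rintro _ ⟨x, rfl⟩; exact (hf x).2⟩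
  have hsup : c < (⨆ x, f x * p x) := by
    refine lt_of_lt_of_le hcy ?_
    have hb : BddAbove (Set.range fun x => f x * p x) := by
      refine ⟨1, ?_⟩
      rintro _ ⟨x, rfl⟩
      exact mul_le_one₀ (hf x).2 (hp.1 x) (hp.2.1 x)
    have := le_ciSup hb y
    rw [hf1 (Set.mem_singleton y)] at this
    simpa using this
  filter_upwards [hlim.eventually (lt_mem_nhds hsup),
    hr.eventually_ge_atTop 1] with n hn hn1
  have := hQ n
  have hI : 0 ≤ ∫ x, f x ^ rate n ∂(Q n) :=
    integral_nonneg (fun x => pow_nonneg (hf x).1 _)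
  have hle2 : c ^ rate n ≤ ∫ x, f x ^ rate n ∂(Q n) := by
    rw [← Real.rpow_inv_natCast_pow hI (by omega : rate n ≠ 0)]
    exact pow_le_pow_left₀ hc hn.le _
  refine le_trans (ENNReal.ofReal_le_ofReal hle2) ?_
  rw [ofReal_integral_eq_lintegral_ofReal (integrable_pow_of f.continuous hf _)
    (Filter.Eventually.of_forall (fun x => pow_nonneg (hf x).1 _))]
  calc ∫⁻ x, ENNReal.ofReal (f x ^ rate n) ∂(Q n) ≤ ∫⁻ x, O.indicator 1 x ∂(Q n) := by
        refine lintegral_mono (fun x => ?_)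
        by_cases hx : x ∈ O
        · simp only [hx, Set.indicator_of_mem, Pi.one_apply]
          rw [ENNReal.ofReal_le_one]
          exact pow_le_one₀ (hf x).1 (hf x).2
        · have : f x = 0 := hf0 hx
          rw [this]
          simp [zero_pow (by omega : rate n ≠ 0)]
    _ = Q n O := lintegral_indicator_one hO.measurableSet

/-- From convergence along sequences to uniform local statements. -/
theorem cont_conv {R : ℕ → S → Prop} {x : S}
    (h : ∀ xs : ℕ → S, Tendsto xs atTop (𝓝 x) → ∀ᶠ n in atTop, R n (xs n)) :
    ∃ U : Set S, IsOpen U ∧ x ∈ U ∧ ∀ᶠ n in atTop, ∀ x' ∈ U, R n x' := by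
  by_contra hcon
  push Not at hcon
  have hfr : ∀ k : ℕ, ∃ᶠ n in atTop, ∃ x' ∈ ball x (1 / ((k:ℝ) + 1)), ¬ R n x' :=
    fun k => hcon _ isOpen_ball (mem_ball_self (by positivity))
  obtain ⟨ψ, hψ, hψ2⟩ := extraction_forall_of_frequently hfr
  choose z hz hzR using hψ2
  let xs : ℕ → S := Function.extend ψ z (fun _ => x)
  have hxs : ∀ j, xs (ψ j) = z j := fun j => hψ.injective.extend_apply _ _ _
  have hlim : Tendsto xs atTop (𝓝 x) := by
    rw [Metric.tendsto_atTop]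
    intro ε hε
    obtain ⟨k, hk⟩ := exists_nat_one_div_lt hε
    refine ⟨ψ k, fun n hn => ?_⟩
    by_cases hex : ∃ j, ψ j = n
    · obtain ⟨j, rfl⟩ := hex
      rw [hxs]
      have hkj : k ≤ j := hψ.le_iff_le.1 hn
      have h1 := mem_ball.1 (hz j)
      have h2 : 1 / ((j:ℝ) + 1) ≤ 1 / ((k:ℝ) + 1) :=
        one_div_le_one_div_of_le (by positivity) (by
          have : (k:ℝ) ≤ j := by exact_mod_cast hkj
          linarith)
      linarith
    · have : xs n = x := Function.extend_apply' _ _ _ hex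
      rw [this, dist_self]
      exact hε
  have := hψ.tendsto_atTop.eventually (h xs hlim)
  obtain ⟨k, hk⟩ := this.exists
  rw [hxs] at hk
  exact hzR k hk

theorem exp_contra {φ : ℕ → ℕ} (hφ : StrictMono φ) {c d : ℝ} (hd : 0 < d) (hdc : d < c) (C : ℕ)
    (h : ∀ᶠ k in atTop, ENNReal.ofReal (c ^ φ k) ≤ (C : ENNReal) * ENNReal.ofReal (d ^ φ k)) :
    False := by
  have h1 : 1 < c / d := by rwa [one_lt_div hd]
  have h2 := (tendsto_pow_atTop_atTop_of_one_lt h1).comp hφ.tendsto_atTop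
  obtain ⟨k, hk1, hk2⟩ := (h.and (h2.eventually_gt_atTop (C:ℝ))).exists
  rw [← ENNReal.ofReal_natCast, ← ENNReal.ofReal_mul (Nat.cast_nonneg C),
    ENNReal.ofReal_le_ofReal_iff (by positivity)] at hk1
  simp only [Function.comp_apply, div_pow] at hk2
  rw [lt_div_iff₀ (by positivity)] at hk2
  linarith

section Flux

variable {Px : S → C(ℝ≥0, S) → ℝ} {A : Set S}
    {κ : ℕ → ℝ≥0 → ProbabilityTheory.Kernel S S} {P : ℕ → Measure S}
    {ρ : S → ℝ} {φ : ℕ → ℕ}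

theorem flux_lower (hyp : DevSetup S Px A)
    (hκ : ∀ n t, ProbabilityTheory.IsMarkovKernel (κ n t))
    (hP : ∀ n, IsProbabilityMeasure (P n))
    (hκLD : ∀ (t : ℝ≥0) (x : S) (xs : ℕ → S), Tendsto xs atTop (𝓝 x) →
      LDConv (fun n => κ n t (xs n)) (fun n => n) (fun y => transDen Px x t y))
    (hρdev : IsDeviabilityDensity ρ) (hφ : StrictMono φ)
    (hρ : LDConv (fun k => P (φ k)) φ ρ) (t : ℝ≥0) {O₁ O₂ : Set S} (h₁ : IsOpen O₁)
    (h₂ : IsOpen O₂) {x y : S} (hx : x ∈ O₁) (hy : y ∈ O₂) {c : ℝ} (hc : 0 ≤ c)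
    (hxy : c < ρ x * transDen Px x t y) :
    ∀ᶠ k in atTop, ENNReal.ofReal (c ^ φ k) ≤ ∫⁻ z in O₁, κ (φ k) t z O₂ ∂(P (φ k)) := by
  have hp0 := td_nonneg hyp x t y
  have hppos : 0 < transDen Px x t y := by
    rcases hp0.eq_or_lt with h | h
    · rw [← h] at hxy; simp at hxy; linarith
    · exact h
  set p := transDen Px x t y with hpdef
  have h1 : c / p < ρ x := by rwa [div_lt_iff₀ hppos]
  obtain ⟨c₁, hc1, hc1'⟩ := exists_between h1
  have hc1pos : 0 < c₁ := lt_of_le_of_lt (by positivity) hc1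
  have hc2 : c / c₁ < p := by
    rw [div_lt_iff₀ hppos] at hc1
    rw [div_lt_iff₀ hc1pos]; linarith
  have hc20 : 0 ≤ c / c₁ := by positivity
  obtain ⟨U, hU, hxU, hUe⟩ := cont_conv
    (R := fun n x' => ENNReal.ofReal ((c / c₁) ^ n) ≤ κ n t x' O₂) (x := x) (fun xs hxs =>
      ld_lower (fun n => inferInstance) tendsto_id (goodDen_td hyp x t) (hκLD t x xs hxs)
        h₂ hc20 hy hc2)
  have hl := ld_lower (fun n => hP (φ n)) hφ.tendsto_atTop (goodDen_of_dev hρdev) hρ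
    (h₁.inter hU) hc1pos.le ⟨hx, hxU⟩ hc1'
  filter_upwards [hl, hφ.tendsto_atTop.eventually hUe] with k hk1 hk2
  calc ENNReal.ofReal (c ^ φ k)
      = ENNReal.ofReal ((c / c₁) ^ φ k) * ENNReal.ofReal (c₁ ^ φ k) := by
        rw [← ENNReal.ofReal_mul (by positivity), ← mul_pow, div_mul_cancel₀ _ hc1pos.ne']
    _ ≤ ENNReal.ofReal ((c / c₁) ^ φ k) * P (φ k) (O₁ ∩ U) := by gcongr
    _ = ∫⁻ z in O₁ ∩ U, ENNReal.ofReal ((c / c₁) ^ φ k) ∂(P (φ k)) := by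
        rw [setLIntegral_const]
    _ ≤ ∫⁻ z in O₁ ∩ U, κ (φ k) t z O₂ ∂(P (φ k)) :=
        setLIntegral_mono' (h₁.inter hU).measurableSet (fun z hz => hk2 z hz.2)
    _ ≤ _ := lintegral_mono_set Set.inter_subset_left

theorem flux_upper (hyp : DevSetup S Px A)
    (hκ : ∀ n t, ProbabilityTheory.IsMarkovKernel (κ n t))
    (hP : ∀ n, IsProbabilityMeasure (P n))
    (hκLD : ∀ (t : ℝ≥0) (x : S) (xs : ℕ → S), Tendsto xs atTop (𝓝 x) →
      LDConv (fun n => κ n t (xs n)) (fun n => n) (fun y => transDen Px x t y))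
    (hρdev : IsDeviabilityDensity ρ) (hφ : StrictMono φ)
    (hρ : LDConv (fun k => P (φ k)) φ ρ) (t : ℝ≥0) {F₁ F₂ : Set S} (h₁ : IsClosed F₁)
    (h₂ : IsClosed F₂) {c d : ℝ} (hc : 0 ≤ c) (hcd : c < d) (hd1 : d ≤ 1)
    (hle : ∀ x ∈ F₁, ∀ y ∈ F₂, ρ x * transDen Px x t y ≤ c) :
    ∃ C : ℕ, ∀ᶠ k in atTop, ∫⁻ z in F₁, κ (φ k) t z F₂ ∂(P (φ k)) ≤
      (C : ENNReal) * ENNReal.ofReal (d ^ φ k) := by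
  obtain ⟨d', hd'1, hd'2⟩ := exists_between hcd
  have hd : 0 < d := by linarith
  have hK : IsCompact ({x | d' ≤ ρ x} ∩ F₁) :=
    (hρdev.2.2 d' ⟨by linarith, by linarith⟩).inter_right h₁
  have hq : ∃ W : Set S, IsOpen W ∧ ({x | d' ≤ ρ x} ∩ F₁) ⊆ W ∧ ∃ C : ℕ, ∀ᶠ k in atTop,
      ∫⁻ z in W, κ (φ k) t z F₂ ∂(P (φ k)) ≤ (C : ENNReal) * ENNReal.ofReal (d ^ φ k) := by
    refine hK.induction_on (p := fun s => ∃ W : Set S, IsOpen W ∧ s ⊆ W ∧ ∃ C : ℕ,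
      ∀ᶠ k in atTop, ∫⁻ z in W, κ (φ k) t z F₂ ∂(P (φ k)) ≤
        (C : ENNReal) * ENNReal.ofReal (d ^ φ k)) ?_ ?_ ?_ ?_
    · exact ⟨∅, isOpen_empty, subset_rfl, 0, by simp⟩
    · rintro s s' hss ⟨W, hW, hsW, hC⟩
      exact ⟨W, hW, hss.trans hsW, hC⟩
    · rintro s s' ⟨W, hW, hsW, C, hC⟩ ⟨W', hW', hsW', C', hC'⟩
      refine ⟨W ∪ W', hW.union hW', Set.union_subset_union hsW hsW', C + C', ?_⟩
      filter_upwards [hC, hC'] with k hk hk'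
      refine (lintegral_union_le _ _ _).trans ?_
      push_cast
      rw [add_mul]
      exact add_le_add hk hk'
    · rintro x ⟨hxd, hxF⟩
      have hr : 0 < ρ x := lt_of_lt_of_le (by linarith) hxd
      have hlt : c / ρ x < d / ρ x := by gcongr
      obtain ⟨e₂, he1, he2⟩ := exists_between hlt
      have he2pos : 0 < e₂ := lt_of_le_of_lt (by positivity) he1
      have hre : ρ x < d / e₂ := by
        rw [lt_div_iff₀ hr] at he2
        rw [lt_div_iff₀ he2pos]; linarith
      obtain ⟨e, hee1, hee2⟩ := exists_between hre
      obtain ⟨r, hr0, hrsub⟩ := (nhds_basis_closedBall.mem_iff).1 (dev_usc hρdev hee1)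
      obtain ⟨U, hU, hxU, hUe⟩ := cont_conv
        (R := fun n x' => κ n t x' F₂ ≤ ENNReal.ofReal (e₂ ^ n)) (x := x) (fun xs hxs =>
          ld_upper (fun n => inferInstance) tendsto_id (goodDen_td hyp x t) (hκLD t x xs hxs)
            h₂ (by positivity : 0 ≤ c / ρ x) he1 (fun y hy => by
              rw [le_div_iff₀ hr]
              linarith [hle x hxF y hy]))
      have hu := ld_upper (fun n => hP (φ n)) hφ.tendsto_atTop (goodDen_of_dev hρdev) hρ
        (isClosed_closedBall (x := x) (ε := r)) (by linarith : 0 ≤ e) hee2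
        (fun y hy => le_of_lt (hrsub hy))
      refine ⟨U ∩ ball x r, mem_nhdsWithin_of_mem_nhds
        ((hU.inter isOpen_ball).mem_nhds ⟨hxU, mem_ball_self hr0⟩),
        U ∩ ball x r, hU.inter isOpen_ball, subset_rfl, 1, ?_⟩
      filter_upwards [hu, hφ.tendsto_atTop.eventually hUe] with k hk1 hk2
      calc ∫⁻ z in U ∩ ball x r, κ (φ k) t z F₂ ∂(P (φ k))
          ≤ ∫⁻ z in U ∩ ball x r, ENNReal.ofReal (e₂ ^ φ k) ∂(P (φ k)) :=
            setLIntegral_mono' (hU.inter isOpen_ball).measurableSet (fun z hz => hk2 z hz.1)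
        _ = ENNReal.ofReal (e₂ ^ φ k) * P (φ k) (U ∩ ball x r) := by rw [setLIntegral_const]
        _ ≤ ENNReal.ofReal (e₂ ^ φ k) * ENNReal.ofReal ((d / e₂) ^ φ k) := by
            gcongr
            exact (measure_mono (Set.inter_subset_right.trans ball_subset_closedBall)).trans hk1
        _ = ((1 : ℕ) : ENNReal) * ENNReal.ofReal (d ^ φ k) := by
            rw [← ENNReal.ofReal_mul (by positivity), ← mul_pow, mul_div_cancel₀ _ he2pos.ne']
            simp
  obtain ⟨W, hW, hKW, C, hC⟩ := hq
  have hcl : IsClosed (F₁ ∩ Wᶜ) := h₁.inter hW.isClosed_compl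
  have hu := ld_upper (fun n => hP (φ n)) hφ.tendsto_atTop (goodDen_of_dev hρdev) hρ
    hcl (by linarith : 0 ≤ d') hd'2 (fun y hy => by
      by_contra hlt
      push Not at hlt
      exact hy.2 (hKW ⟨hlt.le, hy.1⟩))
  refine ⟨C + 1, ?_⟩
  filter_upwards [hC, hu] with k hk1 hk2
  calc ∫⁻ z in F₁, κ (φ k) t z F₂ ∂(P (φ k))
      ≤ ∫⁻ z in W ∪ (F₁ ∩ Wᶜ), κ (φ k) t z F₂ ∂(P (φ k)) := by
        refine lintegral_mono_set (fun z hz => ?_)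
        by_cases h : z ∈ W
        · exact Or.inl h
        · exact Or.inr ⟨hz, h⟩
    _ ≤ ∫⁻ z in W, κ (φ k) t z F₂ ∂(P (φ k)) + ∫⁻ z in F₁ ∩ Wᶜ, κ (φ k) t z F₂ ∂(P (φ k)) :=
        lintegral_union_le _ _ _
    _ ≤ C * ENNReal.ofReal (d ^ φ k) + ENNReal.ofReal (d ^ φ k) := by
        refine add_le_add hk1 (le_trans ?_ hk2)
        calc ∫⁻ z in F₁ ∩ Wᶜ, κ (φ k) t z F₂ ∂(P (φ k))
            ≤ ∫⁻ z in F₁ ∩ Wᶜ, 1 ∂(P (φ k)) :=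
              setLIntegral_mono' hcl.measurableSet (fun z _ => prob_le_one)
          _ = _ := by simp
    _ = _ := by push_cast; ring

theorem rho_inv (hyp : DevSetup S Px A)
    (hκ : ∀ n t, ProbabilityTheory.IsMarkovKernel (κ n t))
    (hP : ∀ n, IsProbabilityMeasure (P n))
    (hinv : ∀ n (t : ℝ≥0) (Γ : Set S), MeasurableSet Γ →
      P n Γ = ∫⁻ x, κ n t x Γ ∂(P n))
    (hκLD : ∀ (t : ℝ≥0) (x : S) (xs : ℕ → S), Tendsto xs atTop (𝓝 x) →
      LDConv (fun n => κ n t (xs n)) (fun n => n) (fun y => transDen Px x t y))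
    (hρdev : IsDeviabilityDensity ρ) (hφ : StrictMono φ)
    (hρ : LDConv (fun k => P (φ k)) φ ρ) (x : S) (t : ℝ≥0) (y : S) :
    ρ x * transDen Px x t y ≤ ρ y := by
  by_contra hcon
  push Not at hcon
  obtain ⟨d, hd1, hd2⟩ := exists_between hcon
  obtain ⟨e, he1, he2⟩ := exists_between hd1
  obtain ⟨c, hc1, hc2⟩ := exists_between hd2
  have h0 := (hρdev.1 y).1
  obtain ⟨r, hr0, hrsub⟩ := (nhds_basis_closedBall.mem_iff).1 (dev_usc hρdev he1)
  have hu := ld_upper (fun n => hP (φ n)) hφ.tendsto_atTop (goodDen_of_dev hρdev) hρ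
    (isClosed_closedBall (x := y) (ε := r)) (by linarith : 0 ≤ e) he2
    (fun z hz => le_of_lt (hrsub hz))
  have hl := flux_lower hyp hκ hP hκLD hρdev hφ hρ t isOpen_univ (isOpen_ball (x := y) (ε := r))
    (Set.mem_univ x) (mem_ball_self hr0) (by linarith : 0 ≤ c) hc2
  refine exp_contra hφ (by linarith : 0 < d) hc1 1 ?_
  filter_upwards [hu, hl] with k hk1 hk2
  rw [Measure.restrict_univ, ← hinv _ t _ isOpen_ball.measurableSet] at hk2
  simpa using hk2.trans ((measure_mono ball_subset_closedBall).trans hk1)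

theorem rho_back (hyp : DevSetup S Px A)
    (hκ : ∀ n t, ProbabilityTheory.IsMarkovKernel (κ n t))
    (hP : ∀ n, IsProbabilityMeasure (P n))
    (hinv : ∀ n (t : ℝ≥0) (Γ : Set S), MeasurableSet Γ →
      P n Γ = ∫⁻ x, κ n t x Γ ∂(P n))
    (hκLD : ∀ (t : ℝ≥0) (x : S) (xs : ℕ → S), Tendsto xs atTop (𝓝 x) →
      LDConv (fun n => κ n t (xs n)) (fun n => n) (fun y => transDen Px x t y))
    (hρdev : IsDeviabilityDensity ρ) (hφ : StrictMono φ)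
    (hρ : LDConv (fun k => P (φ k)) φ ρ) (t : ℝ≥0) (y : S) {c r : ℝ} (hc : 0 ≤ c)
    (hr : 0 < r) (hcy : c < ρ y) :
    ∃ x, ∃ y' ∈ closedBall y r, c < ρ x * transDen Px x t y' := by
  by_contra hcon
  push Not at hcon
  obtain ⟨d, hd1, hd2⟩ := exists_between hcy
  obtain ⟨e, he1, he2⟩ := exists_between hd2
  have h1 := (hρdev.1 y).2
  obtain ⟨C, hC⟩ := flux_upper hyp hκ hP hκLD hρdev hφ hρ t isClosed_univ
    (isClosed_closedBall (x := y) (ε := r)) hc hd1 (by linarith)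
    (fun x _ y' hy' => hcon x y' hy')
  have hl := ld_lower (fun n => hP (φ n)) hφ.tendsto_atTop (goodDen_of_dev hρdev) hρ
    (isOpen_ball (x := y) (ε := r)) (by linarith : 0 ≤ e) (mem_ball_self hr) he2
  refine exp_contra hφ (by linarith : 0 < d) he1 C ?_
  filter_upwards [hC, hl] with k hk1 hk2
  rw [Measure.restrict_univ, ← hinv _ t _ isClosed_closedBall.measurableSet] at hk1
  exact hk2.trans ((measure_mono ball_subset_closedBall).trans hk1)

/-- Exact flux balance in the prelimit. -/
theorem flux_balance_meas {μ : Measure S} [IsProbabilityMeasure μ]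
    {k : ProbabilityTheory.Kernel S S} [ProbabilityTheory.IsMarkovKernel k] {G : Set S}
    (hG : MeasurableSet G) (h : μ G = ∫⁻ x, k x G ∂μ) :
    ∫⁻ x in Gᶜ, k x G ∂μ = ∫⁻ x in G, k x Gᶜ ∂μ := by
  have h1 := lintegral_add_compl (μ := μ) (fun x => k x G) hG
  have h2 : ∫⁻ x in G, k x G ∂μ + ∫⁻ x in G, k x Gᶜ ∂μ = μ G := by
    rw [← lintegral_add_left (ProbabilityTheory.Kernel.measurable_coe k hG)]
    simp [measure_add_measure_compl hG]
  rw [← h, ← h2] at h1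
  refine (ENNReal.add_right_inj ?_).1 h1
  refine ne_of_lt (lt_of_le_of_lt ?_ (measure_lt_top μ G))
  rw [← h2]
  exact le_self_add

theorem flux_balance (hyp : DevSetup S Px A)
    (hκ : ∀ n t, ProbabilityTheory.IsMarkovKernel (κ n t))
    (hP : ∀ n, IsProbabilityMeasure (P n))
    (hinv : ∀ n (t : ℝ≥0) (Γ : Set S), MeasurableSet Γ →
      P n Γ = ∫⁻ x, κ n t x Γ ∂(P n))
    (hκLD : ∀ (t : ℝ≥0) (x : S) (xs : ℕ → S), Tendsto xs atTop (𝓝 x) →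
      LDConv (fun n => κ n t (xs n)) (fun n => n) (fun y => transDen Px x t y))
    (hρdev : IsDeviabilityDensity ρ) (hφ : StrictMono φ)
    (hρ : LDConv (fun k => P (φ k)) φ ρ) (t : ℝ≥0) (Γ : Set S) {x y : S} {c : ℝ} (hc : 0 ≤ c)
    (hx : x ∈ interior Γᶜ) (hy : y ∈ interior Γ) (hcxy : c < ρ x * transDen Px x t y) :
    ∃ x' ∈ closure Γ, ∃ y' ∈ closure Γᶜ, c < ρ x' * transDen Px x' t y' := by
  by_contra hcon
  push Not at hcon
  obtain ⟨d, hd1, hd2⟩ := exists_between hcxy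
  obtain ⟨e, he1, he2⟩ := exists_between hd2
  have h1 : ρ x * transDen Px x t y ≤ 1 :=
    mul_le_one₀ (hρdev.1 x).2 (td_nonneg hyp _ _ _) (td_le_one hyp _ _ _)
  obtain ⟨C, hC⟩ := flux_upper hyp hκ hP hκLD hρdev hφ hρ t isClosed_closure
    isClosed_closure hc hd1 (by linarith) hcon
  have hl := flux_lower hyp hκ hP hκLD hρdev hφ hρ t isOpen_interior isOpen_interior
    hx hy (by linarith : 0 ≤ e) he2
  refine exp_contra hφ (by linarith : 0 < d) he1 C ?_
  filter_upwards [hC, hl] with k hk1 hk2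
  refine hk2.trans (le_trans ?_ hk1)
  have hbal := flux_balance_meas (k := κ (φ k) t) isOpen_interior.measurableSet
    (hinv (φ k) t (interior Γ) isOpen_interior.measurableSet)
  calc ∫⁻ z in interior Γᶜ, κ (φ k) t z (interior Γ) ∂(P (φ k))
      ≤ ∫⁻ z in (interior Γ)ᶜ, κ (φ k) t z (interior Γ) ∂(P (φ k)) :=
        lintegral_mono_set (fun z hz h => interior_subset hz (interior_subset h))
    _ = ∫⁻ z in interior Γ, κ (φ k) t z (interior Γ)ᶜ ∂(P (φ k)) := hbal
    _ = ∫⁻ z in interior Γ, κ (φ k) t z (closure Γᶜ) ∂(P (φ k)) := by rw [closure_compl]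
    _ ≤ _ := lintegral_mono_set (interior_subset.trans subset_closure)

end Flux

/-! ### The limiting transition density -/

section Limit

variable {Px : S → C(ℝ≥0, S) → ℝ} {A : Set S} {PL : S → S → ℝ}

theorem pl_nonneg (hyp : DevSetup S Px A)
    (hPL : ∀ x y : S, Tendsto (fun t : ℝ≥0 => transDen Px x t y) atTop (𝓝 (PL x y)))
    (x y : S) : 0 ≤ PL x y :=
  ge_of_tendsto' (hPL x y) (fun t => td_nonneg hyp x t y)

theorem pl_le_one (hyp : DevSetup S Px A)
    (hPL : ∀ x y : S, Tendsto (fun t : ℝ≥0 => transDen Px x t y) atTop (𝓝 (PL x y)))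
    (x y : S) : PL x y ≤ 1 :=
  le_of_tendsto' (hPL x y) (fun t => td_le_one hyp x t y)

theorem pl_mul_td (hyp : DevSetup S Px A)
    (hPL : ∀ x y : S, Tendsto (fun t : ℝ≥0 => transDen Px x t y) atTop (𝓝 (PL x y)))
    (x y z : S) (t : ℝ≥0) : PL x y * transDen Px y t z ≤ PL x z :=
  le_of_tendsto_of_tendsto' ((hPL x y).mul_const _)
    ((hPL x z).comp (tendsto_atTop_mono (fun s : ℝ≥0 => (le_self_add : s ≤ s + t)) tendsto_id))
    (fun s => td_mul_le hyp x y z s t)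

theorem td_mul_pl (hyp : DevSetup S Px A)
    (hPL : ∀ x y : S, Tendsto (fun t : ℝ≥0 => transDen Px x t y) atTop (𝓝 (PL x y)))
    (x y z : S) (t : ℝ≥0) : transDen Px x t y * PL y z ≤ PL x z :=
  le_of_tendsto_of_tendsto' ((hPL y z).const_mul _)
    ((hPL x z).comp (tendsto_atTop_mono (fun s : ℝ≥0 => (le_add_self : s ≤ t + s)) tendsto_id))
    (fun s => td_mul_le hyp x y z t s)

theorem pl_self (hyp : DevSetup S Px A)
    (hPL : ∀ x y : S, Tendsto (fun t : ℝ≥0 => transDen Px x t y) atTop (𝓝 (PL x y)))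
    {a : S} (ha : a ∈ A) : PL a a = 1 := by
  refine tendsto_nhds_unique (hPL a a) ?_
  simp only [td_self hyp ha]
  exact tendsto_const_nhds

theorem td_le_pl_left (hyp : DevSetup S Px A)
    (hPL : ∀ x y : S, Tendsto (fun t : ℝ≥0 => transDen Px x t y) atTop (𝓝 (PL x y)))
    {a : S} (ha : a ∈ A) (t : ℝ≥0) (y : S) : transDen Px a t y ≤ PL a y := by
  have := pl_mul_td hyp hPL a a y t
  rwa [pl_self hyp hPL ha, one_mul] at this

theorem td_le_pl_right (hyp : DevSetup S Px A)
    (hPL : ∀ x y : S, Tendsto (fun t : ℝ≥0 => transDen Px x t y) atTop (𝓝 (PL x y)))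
    {a : S} (ha : a ∈ A) (t : ℝ≥0) (x : S) : transDen Px x t a ≤ PL x a := by
  have := td_mul_pl hyp hPL x a a t
  rwa [pl_self hyp hPL ha, mul_one] at this

/-- Suprema over subsets of `A` are attained. -/
theorem attain (hyp : DevSetup S Px A) {ρ : S → ℝ} (hρdev : IsDeviabilityDensity ρ)
    {B : Set S} (hB : B ⊆ A) {f : S → ℝ} (hf : ∀ a ∈ B, f a ≤ ρ a) {v : ℝ} (hv : 0 < v)
    (hv1 : v ≤ 1) (h : ∀ c, 0 < c → c < v → ∃ a ∈ B, c < f a) : ∃ a ∈ B, v ≤ f a := by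
  have hfin : ({x | v / 2 ≤ ρ x} ∩ B).Finite :=
    (hyp.locFin _ (hρdev.2.2 (v / 2) ⟨by linarith, by linarith⟩)).subset
      (Set.inter_subset_inter_right _ hB)
  have hmem : ∀ a ∈ B, v / 2 < f a → a ∈ {x | v / 2 ≤ ρ x} ∩ B :=
    fun a ha hfa => ⟨hfa.le.trans (hf a ha), ha⟩
  obtain ⟨a₀, ha₀, hfa₀⟩ := h (v / 2) (by linarith) (by linarith)
  obtain ⟨a, ha, hmax⟩ := Set.exists_max_image _ f hfin ⟨a₀, hmem a₀ ha₀ hfa₀⟩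
  refine ⟨a, ha.2, ?_⟩
  by_contra hlt
  push Not at hlt
  obtain ⟨b, hb, hfb⟩ := h (max (f a) (v / 2)) (lt_max_of_lt_right (by linarith))
    (max_lt hlt (by linarith))
  have := hmax b (hmem b hb (lt_of_le_of_lt (le_max_right _ _) hfb))
  exact absurd (lt_of_le_of_lt (le_max_left _ _) hfb) (not_lt.2 this)

/-- Upper semicontinuity and compactness give a maximiser of `ρ z * PL z a`. -/
theorem attain_pt (hyp : DevSetup S Px A)
    (hPL : ∀ x y : S, Tendsto (fun t : ℝ≥0 => transDen Px x t y) atTop (𝓝 (PL x y)))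
    {ρ : S → ℝ} (hρdev : IsDeviabilityDensity ρ) {F : Set S} (hF : IsClosed F) (a : S) {v : ℝ}
    (hv : 0 < v) (hv1 : v ≤ 1) (h : ∀ c, 0 < c → c < v → ∃ z ∈ F, c < ρ z * PL z a) :
    ∃ z ∈ F, v ≤ ρ z * PL z a := by
  have hK : IsCompact ({x | v / 2 ≤ ρ x} ∩ F) :=
    (hρdev.2.2 (v / 2) ⟨by linarith, by linarith⟩).inter_right hF
  have hck : ∀ k : ℕ, v / 2 ≤ v * (1 - 1 / ((k:ℝ) + 2)) ∧ v * (1 - 1 / ((k:ℝ) + 2)) < v := by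
    intro k
    have h1 : 1 / ((k:ℝ) + 2) ≤ 1 / 2 := by
      apply one_div_le_one_div_of_le <;> linarith [Nat.cast_nonneg (α := ℝ) k]
    have h2 : 0 < 1 / ((k:ℝ) + 2) := by positivity
    constructor <;> nlinarith
  choose z hzF hz using fun k : ℕ => h (v * (1 - 1 / ((k:ℝ) + 2)))
    (by linarith [(hck k).1]) (hck k).2
  have hzK : ∀ k, z k ∈ {x | v / 2 ≤ ρ x} ∩ F := by
    intro k
    refine ⟨?_, hzF k⟩
    have h1 := hz k
    have h2 := (hck k).1
    have h3 := pl_nonneg hyp hPL (z k) a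
    have h4 := pl_le_one hyp hPL (z k) a
    have h5 := (hρdev.1 (z k)).1
    simp only [Set.mem_ofPred_eq]
    nlinarith
  obtain ⟨z₀, hz₀, ψ, hψ, hlim⟩ := hK.tendsto_subseq hzK
  refine ⟨z₀, hz₀.2, ?_⟩
  have hvlim : Tendsto (fun k : ℕ => v * (1 - 1 / ((ψ k : ℝ) + 2))) atTop (𝓝 (v * (1 - 0))) := by
    refine Tendsto.const_mul v (tendsto_const_nhds.sub ?_)
    refine tendsto_const_nhds.div_atTop ?_
    exact tendsto_atTop_add_const_right _ _
      (tendsto_natCast_atTop_atTop.comp hψ.tendsto_atTop)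
  have key : ∀ ε : ℝ, 0 < ε → ε < 1 → v * (1 - ε) ≤ (ρ z₀ + ε) * PL z₀ a := by
    intro ε hε hε1
    obtain ⟨δ, hδ, t₀, t₁, hmove⟩ := hyp.localMove z₀ ε hε
    have e1 := hlim.eventually (dev_usc hρdev (by linarith : ρ z₀ < ρ z₀ + ε))
    have e2 := hlim.eventually (ball_mem_nhds z₀ hδ)
    refine le_of_tendsto (x := atTop)
      (f := fun k : ℕ => v * (1 - 1 / ((ψ k : ℝ) + 2)) * (1 - ε)) ?_ ?_
    · simpa using hvlim.mul_const (1 - ε)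
    · filter_upwards [e1, e2] with k hk1 hk2
      have h1 := hz (ψ k)
      have h2 := (hmove (z (ψ k)) (by rw [dist_comm]; exact hk2)).1
      have h3 := td_mul_pl hyp hPL z₀ (z (ψ k)) a t₀
      have h4 := pl_nonneg hyp hPL (z (ψ k)) a
      have h5 := (hρdev.1 (z (ψ k))).1
      simp only [Function.comp_apply] at hk1
      have h6 : (1 - ε) * PL (z (ψ k)) a ≤ PL z₀ a :=
        (mul_le_mul_of_nonneg_right h2.le h4).trans h3
      calc v * (1 - 1 / ((ψ k : ℝ) + 2)) * (1 - ε)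
          ≤ ρ (z (ψ k)) * PL (z (ψ k)) a * (1 - ε) :=
            mul_le_mul_of_nonneg_right h1.le (by linarith)
        _ = ρ (z (ψ k)) * ((1 - ε) * PL (z (ψ k)) a) := by ring
        _ ≤ (ρ z₀ + ε) * PL z₀ a :=
            mul_le_mul hk1.le h6 (mul_nonneg (by linarith) h4) (by linarith)
  have l1 : Tendsto (fun ε : ℝ => v * (1 - ε)) (𝓝[>] 0) (𝓝 v) := by
    have : ContinuousAt (fun ε : ℝ => v * (1 - ε)) 0 := by fun_prop
    simpa using this.tendsto.mono_left nhdsWithin_le_nhds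
  have l2 : Tendsto (fun ε : ℝ => (ρ z₀ + ε) * PL z₀ a) (𝓝[>] 0) (𝓝 (ρ z₀ * PL z₀ a)) := by
    have : ContinuousAt (fun ε : ℝ => (ρ z₀ + ε) * PL z₀ a) 0 := by fun_prop
    simpa using this.tendsto.mono_left nhdsWithin_le_nhds
  refine le_of_tendsto_of_tendsto l1 l2 ?_
  filter_upwards [Ioo_mem_nhdsGT (zero_lt_one' ℝ)] with ε hε
  exact key ε hε.1 hε.2

/-- Representation of `ρ` through its values on `A`. -/
theorem rho_rep (hyp : DevSetup S Px A)
    (hPL : ∀ x y : S, Tendsto (fun t : ℝ≥0 => transDen Px x t y) atTop (𝓝 (PL x y)))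
    {ρ : S → ℝ} (hρdev : IsDeviabilityDensity ρ)
    (hρinv : ∀ x t y, ρ x * transDen Px x t y ≤ ρ y)
    (hback : ∀ (t : ℝ≥0) (y : S) (c r : ℝ), 0 ≤ c → 0 < r → c < ρ y →
      ∃ x, ∃ y' ∈ closedBall y r, c < ρ x * transDen Px x t y') {y : S} (hy : 0 < ρ y) :
    ∃ a ∈ A, ρ y ≤ ρ a * PL a y := by
  refine attain hyp hρdev subset_rfl (f := fun a => ρ a * PL a y) (fun a _ => ?_) hy
    (hρdev.1 y).2 ?_
  · exact mul_le_of_le_one_right (hρdev.1 a).1 (pl_le_one hyp hPL a y)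
  intro c hc hcy
  obtain ⟨c₂, h2, h2'⟩ := exists_between hcy
  obtain ⟨c₁, h1, h1'⟩ := exists_between h2
  have hc₁ : 0 < c₁ := by linarith
  obtain ⟨T, hT⟩ := visitA hyp hρdev hρinv hc₁ h1' (by linarith [(hρdev.1 y).2])
  obtain ⟨δ, hδ, t₀, t₁, hmove⟩ := hyp.localMove y (1 - c / c₁) (by
    have : c / c₁ < 1 := by rwa [div_lt_one hc₁]
    linarith)
  obtain ⟨x, y', hy', hxy⟩ := hback T y c₂ (δ / 2) (by linarith) (by linarith) h2'
  obtain ⟨a, ha, s, u, hau⟩ := hT T le_rfl x y' hxy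
  refine ⟨a, ha, ?_⟩
  have g1 := (hmove y' (by rw [dist_comm]; linarith [mem_closedBall.1 hy'])).2
  have g2 := hρinv x s a
  have g3 := td_le_pl_left hyp hPL ha u y'
  have g4 := pl_mul_td hyp hPL a y' y t₁
  have n1 := td_nonneg hyp a u y'
  have n2 := (hρdev.1 a).1
  have g5 : c₁ < ρ a * PL a y' := by
    calc c₁ < ρ x * transDen Px x s a * transDen Px a u y' := by linarith
      _ ≤ ρ a * PL a y' := mul_le_mul g2 g3 n1 n2
  have g6 : c / c₁ < transDen Px y' t₁ y := by linarith
  calc c = c₁ * (c / c₁) := by field_simp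
    _ < (ρ a * PL a y') * transDen Px y' t₁ y :=
        mul_lt_mul'' g5 g6 hc₁.le (by positivity)
    _ = ρ a * (PL a y' * transDen Px y' t₁ y) := by ring
    _ ≤ ρ a * PL a y := mul_le_mul_of_nonneg_left g4 n2

end Limit

theorem stmt11
    (Px : S → C(ℝ≥0, S) → ℝ) (A : Set S) (hyp : DevSetup S Px A)
    (PL : S → S → ℝ)
    (hPL : ∀ x y : S, Tendsto (fun t : ℝ≥0 => transDen Px x t y) atTop (𝓝 (PL x y)))
    (κ : ℕ → ℝ≥0 → ProbabilityTheory.Kernel S S)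
    (hκ : ∀ n t, ProbabilityTheory.IsMarkovKernel (κ n t))
    (P : ℕ → Measure S) (hP : ∀ n, IsProbabilityMeasure (P n))
    (hinv : ∀ n (t : ℝ≥0) (Γ : Set S), MeasurableSet Γ →
      P n Γ = ∫⁻ x, κ n t x Γ ∂(P n))
    (hκLD : ∀ (t : ℝ≥0) (x : S) (xs : ℕ → S), Tendsto xs atTop (𝓝 x) →
      LDConv (fun n => κ n t (xs n)) (fun n => n) (fun y => transDen Px x t y))
    (ρ : S → ℝ) (hρdev : IsDeviabilityDensity ρ)
    (φ : ℕ → ℕ) (hφ : StrictMono φ)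
    (hρ : LDConv (fun k => P (φ k)) φ ρ)
    (A' A'' : Set S) (hA'ne : A'.Nonempty) (hA''ne : A''.Nonempty)
    (hdisj : Disjoint A' A'') (huni : A' ∪ A'' = A)
    (Γ : Set S) (hΓ' : A' ⊆ interior Γ) (hΓ'' : A'' ⊆ interior Γᶜ)
    (hbdry : ∀ a ∈ A'', maxFlux PL ρ A'' (interior Γ) ≤ ρ a →
      (⨆ y ∈ interior Γ, PL a y) = ⨆ y ∈ closure Γ, PL a y)
    (hgt : maxFlux PL ρ A' (closure Γᶜ) < maxFlux PL ρ A'' (interior Γ)) :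
    ∃ xh ∈ frontier Γ, ∃ atil ∈ A'', ∃ ahat ∈ A'',
      PL xh atil = 1 ∧
      PL ahat xh = (⨆ y ∈ closure Γ, PL ahat y) ∧
      ρ xh = ρ ahat * PL ahat xh ∧
      ρ xh = maxFlux PL ρ A'' (interior Γ) ∧
      ρ xh = maxFlux PL ρ (interior Γᶜ) (interior Γ) ∧
      ρ xh = maxFlux PL ρ (closure Γ) (closure Γᶜ) ∧
      ρ xh = ⨆ y ∈ frontier Γ, ρ y := by
  have hρinv : ∀ x t y, ρ x * transDen Px x t y ≤ ρ y :=
    fun x t y => rho_inv hyp hκ hP hinv hκLD hρdev hφ hρ x t y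
  have hback : ∀ (t : ℝ≥0) (y : S) (c r : ℝ), 0 ≤ c → 0 < r → c < ρ y →
      ∃ x, ∃ y' ∈ closedBall y r, c < ρ x * transDen Px x t y' :=
    fun t y c r hc hr hcy => rho_back hyp hκ hP hinv hκLD hρdev hφ hρ t y hc hr hcy
  have hPL0 := pl_nonneg hyp hPL
  have hPL1 := pl_le_one hyp hPL
  have hρ0 : ∀ x, 0 ≤ ρ x := fun x => (hρdev.1 x).1
  have hρ1 : ∀ x, ρ x ≤ 1 := fun x => (hρdev.1 x).2
  have hA' : A' ⊆ A := huni ▸ Set.subset_union_left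
  have hA'' : A'' ⊆ A := huni ▸ Set.subset_union_right
  -- elementary bounds on suprema of `PL` and on the max flux
  have hs0 : ∀ (G : Set S) x, 0 ≤ ⨆ y ∈ G, PL x y := fun G x => bsup_nonneg' (hPL0 x)
  have hs1 : ∀ (G : Set S) x, (⨆ y ∈ G, PL x y) ≤ 1 :=
    fun G x => bsup_le' zero_le_one (fun y _ => hPL1 x y)
  have hsle : ∀ (G : Set S) x y, y ∈ G → PL x y ≤ ⨆ y ∈ G, PL x y :=
    fun G x y hy => le_bsup' (hPL0 x) (hPL1 x) hy
  have hfl : ∀ (G G' : Set S) x, x ∈ G → ρ x * (⨆ y ∈ G', PL x y) ≤ maxFlux PL ρ G G' :=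
    fun G G' x hx => le_bsup' (f := fun x => ρ x * ⨆ y ∈ G', PL x y)
      (fun x => mul_nonneg (hρ0 x) (hs0 G' x))
      (fun x => mul_le_one₀ (hρ1 x) (hs0 G' x) (hs1 G' x)) hx
  have hfl2 : ∀ (G G' : Set S) x y, x ∈ G → y ∈ G' → ρ x * PL x y ≤ maxFlux PL ρ G G' :=
    fun G G' x y hx hy =>
      (mul_le_mul_of_nonneg_left (hsle G' x y hy) (hρ0 x)).trans (hfl G G' x hx)
  have hflex : ∀ (G G' : Set S) c, 0 ≤ c → c < maxFlux PL ρ G G' →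
      ∃ x ∈ G, ∃ y ∈ G', c < ρ x * PL x y := by
    intro G G' c hc h
    obtain ⟨x, hx, hcx⟩ := exists_of_lt_bsup' hc h
    have hρx : 0 < ρ x := by
      rcases (hρ0 x).eq_or_lt with h0 | h0
      · rw [← h0] at hcx; simp at hcx; linarith
      · exact h0
    obtain ⟨y, hy, hcy⟩ := exists_of_lt_bsup' (c := c / ρ x) (by positivity)
      (s := G') (f := PL x) (by rw [div_lt_iff₀ hρx]; linarith)
    rw [div_lt_iff₀ hρx] at hcy
    exact ⟨x, hx, y, hy, by linarith⟩
  have hflle : ∀ (G G' : Set S) c, 0 ≤ c → (∀ x ∈ G, ∀ y ∈ G', ρ x * PL x y ≤ c) →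
      maxFlux PL ρ G G' ≤ c := by
    intro G G' c hc h
    by_contra hlt
    push Not at hlt
    obtain ⟨x, hx, y, hy, hxy⟩ := hflex G G' c hc hlt
    exact absurd (h x hx y hy) (not_le.2 hxy)
  have hΦ0 : 0 ≤ maxFlux PL ρ A' (closure Γᶜ) :=
    bsup_nonneg' (fun x => mul_nonneg (hρ0 x) (hs0 _ x))
  set M := maxFlux PL ρ A'' (interior Γ) with hM
  set m := maxFlux PL ρ A' (closure Γᶜ) with hm
  have hMpos : 0 < M := by linarith
  have hM1 : M ≤ 1 := hflle _ _ 1 zero_le_one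
    (fun x _ y _ => mul_le_one₀ (hρ1 x) (hPL0 x y) (hPL1 x y))
  have hfr : ∀ z, z ∈ frontier Γ → z ∈ closure Γ ∧ z ∈ closure Γᶜ := by
    intro z hz
    rwa [frontier_eq_closure_inter_closure] at hz
  -- flux from `A''` into the closure
  have hA''M : ∀ a ∈ A'', ∀ y ∈ closure Γ, ρ a * PL a y ≤ M := by
    intro a ha y hy
    rcases le_or_gt M (ρ a) with h | h
    · have := hfl A'' (interior Γ) a ha
      rw [hbdry a ha h] at this
      exact (mul_le_mul_of_nonneg_left (hsle _ a y hy) (hρ0 a)).trans this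
    · exact (mul_le_of_le_one_right (hρ0 a) (hPL1 a y)).trans h.le
  -- `ρ ≤ M` on the boundary
  have hbd : ∀ z ∈ frontier Γ, ρ z ≤ M := by
    intro z hz
    rcases (hρ0 z).eq_or_lt with h0 | h0
    · rw [← h0]; exact hMpos.le
    obtain ⟨a, ha, hza⟩ := rho_rep hyp hPL hρdev hρinv hback h0
    rw [← huni] at ha
    rcases ha with ha | ha
    · have := hfl2 A' (closure Γᶜ) a z ha (hfr z hz).2
      linarith
    · exact hza.trans (hA''M a ha z (hfr z hz).1)
  -- crossing flux is bounded by `M`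
  have hcross : ∀ x y, (x ∈ closure Γ ∧ y ∈ closure Γᶜ) ∨ (x ∈ closure Γᶜ ∧ y ∈ closure Γ) →
      ρ x * PL x y ≤ M := by
    intro x y hxy
    refine le_of_tendsto' ((hPL x y).const_mul (ρ x)) (fun t => ?_)
    by_contra hlt
    push Not at hlt
    have hρx : 0 < ρ x := by
      rcases (hρ0 x).eq_or_lt with h0 | h0
      · rw [← h0] at hlt; simp at hlt; linarith
      · exact h0
    have hlt' : M / ρ x < transDen Px x t y := by rw [div_lt_iff₀ hρx]; linarith
    have hex : ∃ z ∈ frontier Γ, ∃ s u : ℝ≥0,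
        M / ρ x < transDen Px x s z * transDen Px z u y := by
      rcases hxy with ⟨h1, h2⟩ | ⟨h1, h2⟩
      · exact td_cross hyp (by positivity) hlt' h1 h2
      · obtain ⟨z, hz, h⟩ := td_cross hyp (Γ := Γᶜ) (by positivity) hlt' h1
          (by rwa [compl_compl])
        rw [frontier_compl] at hz
        exact ⟨z, hz, h⟩
    obtain ⟨z, hz, s, u, hzz⟩ := hex
    rw [div_lt_iff₀ hρx] at hzz
    have h1 := hρinv x s z
    have h2 := hbd z hz
    have h3 := td_le_one hyp z u y
    have h4 := td_nonneg hyp x s z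
    nlinarith [mul_le_of_le_one_right h4 h3]
  -- near-optimal boundary points flowing to `A''`
  have hnear : ∀ c, 0 < c → c < M → ∃ a ∈ A'', ∃ z ∈ frontier Γ, c < ρ z * PL z a := by
    intro c hc hcM
    obtain ⟨c₂, h2, h2'⟩ := exists_between (max_lt hcM hgt)
    obtain ⟨c₁, h1, h1'⟩ := exists_between h2
    have hcc₁ : c < c₁ := lt_of_le_of_lt (le_max_left _ _) h1
    have hmc₁ : m < c₁ := lt_of_le_of_lt (le_max_right _ _) h1
    obtain ⟨T, hT⟩ := visitA hyp hρdev hρinv (by linarith : 0 < c₁) h1' (by linarith)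
    obtain ⟨a₀, ha₀, y₀, hy₀, h₀⟩ := hflex A'' (interior Γ) c₂ (by linarith) h2'
    obtain ⟨t, ht1, ht2⟩ := ((((hPL a₀ y₀).const_mul (ρ a₀)).eventually
      (lt_mem_nhds h₀)).and (eventually_ge_atTop T)).exists
    obtain ⟨x, hx, y, hy, hxy⟩ := flux_balance hyp hκ hP hinv hκLD hρdev hφ hρ t Γ
      (by linarith : 0 ≤ c₂) (hΓ'' ha₀) hy₀ ht1
    obtain ⟨a, ha, s, u, hau⟩ := hT t ht2 x y hxy
    have n1 := td_nonneg hyp x s a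
    have n2 := td_nonneg hyp a u y
    have g1 := hρinv x s a
    have g2 := td_le_pl_left hyp hPL ha u y
    have haA := ha
    rw [← huni] at ha
    rcases ha with ha | ha
    · have h5 := hfl2 A' (closure Γᶜ) a y ha hy
      have h6 : ρ x * transDen Px x s a * transDen Px a u y ≤ ρ a * PL a y :=
        mul_le_mul g1 g2 n2 (hρ0 a)
      linarith
    · have h7 : c₁ < ρ x * transDen Px x s a := by
        have := mul_le_of_le_one_right (mul_nonneg (hρ0 x) n1) (td_le_one hyp a u y)
        linarith
      have hρx : 0 < ρ x := by
        rcases (hρ0 x).eq_or_lt with h0 | h0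
        · rw [← h0] at h7; simp at h7; linarith
        · exact h0
      obtain ⟨z, hz, s', u', hzz⟩ := td_cross hyp (Γ := Γ) (c := c₁ / ρ x)
        (div_nonneg (by linarith) hρx.le) (x := x) (t := s) (y := a)
        (by rw [div_lt_iff₀ hρx]; linarith) hx
        (subset_closure (interior_subset (hΓ'' ha)))
      rw [div_lt_iff₀ hρx] at hzz
      refine ⟨a, ha, z, hz, ?_⟩
      have h8 : ρ x * transDen Px x s' z * transDen Px z u' a ≤ ρ z * PL z a :=
        mul_le_mul (hρinv x s' z) (td_le_pl_right hyp hPL haA u' z) (td_nonneg hyp _ _ _) (hρ0 z)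
      linarith
  -- the point `ã`
  have hg0 : ∀ a z, 0 ≤ ρ z * PL z a := fun a z => mul_nonneg (hρ0 z) (hPL0 z a)
  have hg1 : ∀ a z, ρ z * PL z a ≤ 1 := fun a z => mul_le_one₀ (hρ1 z) (hPL0 z a) (hPL1 z a)
  have hρPL : ∀ x y, ρ x * PL x y ≤ ρ y := fun x y =>
    le_of_tendsto' ((hPL x y).const_mul (ρ x)) (fun t => hρinv x t y)
  obtain ⟨atil, hatil, hatilM⟩ := attain hyp hρdev hA''
    (f := fun a => ⨆ z ∈ frontier Γ, ρ z * PL z a)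
    (fun a _ => bsup_le' (hρ0 a) (fun z _ => hρPL z a)) hMpos hM1 (by
      intro c hc hcM
      obtain ⟨a, ha, z, hz, h⟩ := hnear c hc hcM
      exact ⟨a, ha, lt_of_lt_of_le h (le_bsup' (hg0 a) (hg1 a) hz)⟩)
  obtain ⟨xh, hxh, hxhM⟩ := attain_pt hyp hPL hρdev isClosed_frontier atil hMpos hM1
    (fun c hc hcM => exists_of_lt_bsup' hc.le (lt_of_lt_of_le hcM hatilM))
  have hρxh : ρ xh = M := le_antisymm (hbd xh hxh)
    (hxhM.trans (mul_le_of_le_one_right (hρ0 xh) (hPL1 xh atil)))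
  have hPLxh : PL xh atil = 1 := by
    refine le_antisymm (hPL1 _ _) ?_
    rw [hρxh] at hxhM
    by_contra hlt
    push Not at hlt
    nlinarith
  -- the point `â`
  obtain ⟨ahat, hahat, hrep⟩ := rho_rep hyp hPL hρdev hρinv hback (y := xh) (by rw [hρxh]; exact hMpos)
  rw [hρxh] at hrep
  have hahat'' : ahat ∈ A'' := by
    rw [← huni] at hahat
    rcases hahat with h | h
    · have := hfl2 A' (closure Γᶜ) ahat xh h (hfr xh hxh).2
      linarith
    · exact h
  have hrepeq : ρ ahat * PL ahat xh = M :=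
    le_antisymm (hA''M ahat hahat'' xh (hfr xh hxh).1) hrep
  have hahatM : M ≤ ρ ahat := hrep.trans (mul_le_of_le_one_right (hρ0 _) (hPL1 _ _))
  have hPLhat : PL ahat xh = ⨆ y ∈ closure Γ, PL ahat y := by
    refine le_antisymm (hsle _ _ _ (hfr xh hxh).1) ?_
    refine bsup_le' (hPL0 _ _) (fun y hy => ?_)
    have h1 := hA''M ahat hahat'' y hy
    rw [← hrepeq] at h1
    exact le_of_mul_le_mul_left h1 (by linarith)
  refine ⟨xh, hxh, atil, hatil, ahat, hahat'', hPLxh, hPLhat, by rw [hrepeq, hρxh], hρxh, ?_, ?_, ?_⟩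
  · rw [hρxh]
    refine le_antisymm ?_ (hflle _ _ _ hMpos.le (fun x hx y hy => hcross x y
      (Or.inr ⟨subset_closure (interior_subset hx), subset_closure (interior_subset hy)⟩)))
    refine hflle _ _ _ (bsup_nonneg' (fun x => mul_nonneg (hρ0 x) (hs0 _ x))) ?_
    exact fun x hx y hy => hfl2 _ _ x y (hΓ'' hx) hy
  · refine le_antisymm ?_ (by
      rw [hρxh]
      exact hflle _ _ _ hMpos.le (fun x hx y hy => hcross x y (Or.inl ⟨hx, hy⟩)))
    have := hfl2 (closure Γ) (closure Γᶜ) xh atil (hfr xh hxh).1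
      (subset_closure (interior_subset (hΓ'' hatil)))
    rwa [hPLxh, mul_one] at this
  · refine le_antisymm (le_bsup' hρ0 hρ1 hxh) ?_
    rw [hρxh]
    exact bsup_le' hMpos.le hbd
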